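/- Let q ∈ ℂ with 0 < |q| < 1, let A : ℤ → ℂ be any sequence, and let b, x ∈ ℂ with b ≠ 0 and x ≠ q^{-m} for every m ∈ ℕ. Assume the families (i,j) ↦ A_{i-j} q^{ij} (x/b)^j (bq^{-i};q)_j / ((q;q)_i (q;q)_j) and (i,j) ↦ A_{i-j} q^{ij} (x/b)^j (b;q)_j / ((q;q)_i (q;q)_j (x;q)_j), both indexed by ℕ×ℕ, are absolutely summable. Then ∑_{i,j≥0} A_{i-j} q^{ij} (x/b)^j (bq^{-i};q)_j / ((q;q)_i (q;q)_j) = (x;q)_∞ · ∑_{i,j≥0} A_{i-j} q^{ij} (x/b)^j (b;q)_j / ((q;q)_i (q;q)_j (x;q)_j). -/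

import Mathlib

/-- The finite q-shifted factorial `(a;q)_n = ∏_{k=0}^{n-1} (1 - a q^k)`. -/
noncomputable def qPoch (a q : ℂ) (n : ℕ) : ℂ := ∏ k ∈ Finset.range n, (1 - a * q ^ k)

/-- The infinite q-shifted factorial `(a;q)_∞ = ∏_{k=0}^{∞} (1 - a q^k)`. -/
noncomputable def qPochInf (a q : ℂ) : ℂ := ∏' k : ℕ, (1 - a * q ^ k)

/-! On the right-hand side put `y = x / b`, so that `(x;q)_∞ / (x;q)_j = (b y q^j;q)_∞`. Expand each
`(b y q^j;q)_∞` by Euler's series `(z;q)_∞ = ∑ₖ (-1)^k q^{k(k-1)/2} z^k / (q;q)_k` and collect the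
resulting triple series along the diagonals `(i, j, k) ↦ (i + k, j + k)`, which fix `i - j` and
hence the arbitrary factor `A (i - j)`. On the fibre over `(M, N)` what remains is the
`q`-Chu–Vandermonde sum for `(b q^{-M};q)_N`. -/

open Finset Filter Topology

section FiniteFactorial

lemma qPoch_zero (a q : ℂ) : qPoch a q 0 = 1 := prod_range_zero _

lemma qPoch_succ (a q : ℂ) (n : ℕ) : qPoch a q (n + 1) = qPoch a q n * (1 - a * q ^ n) :=
  prod_range_succ _ _

lemma qPoch_eq_zero_iff {a q : ℂ} {n : ℕ} : qPoch a q n = 0 ↔ ∃ k < n, a * q ^ k = 1 := by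
  simp only [qPoch, prod_eq_zero_iff, mem_range, sub_eq_zero, eq_comm (a := (1 : ℂ))]

lemma qPoch_self_succ (q : ℂ) (n : ℕ) : qPoch q q (n + 1) = qPoch q q n * (1 - q ^ (n + 1)) := by
  rw [qPoch_succ, pow_succ']

lemma qPoch_self_ne_zero {q : ℂ} (hq : ∀ n : ℕ, q ^ (n + 1) ≠ 1) (n : ℕ) : qPoch q q n ≠ 0 := by
  rw [Ne, qPoch_eq_zero_iff]
  rintro ⟨k, -, hk⟩
  exact hq k (by rw [pow_succ', hk])

lemma one_sub_pow_succ_mul_qPoch_div_succ {q : ℂ} (hq : ∀ n : ℕ, q ^ (n + 1) ≠ 1)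
    (a : ℂ) (n : ℕ) :
    (1 - q ^ (n + 1)) * (qPoch a q (n + 1) / qPoch q q (n + 1)) =
      (1 - a * q ^ n) * (qPoch a q n / qPoch q q n) := by
  have := sub_ne_zero.mpr (hq n).symm
  have := qPoch_self_ne_zero hq n
  rw [qPoch_succ, qPoch_self_succ]
  field_simp

-- `q`-Chu–Vandermonde: both sides satisfy
-- `(1 - q ^ (N + 1)) * S (N + 1) = (1 - a * b * q ^ N) * S N`.
lemma sum_antidiagonal_qPoch_div_mul_qPoch_div {q : ℂ} (hq : ∀ n : ℕ, q ^ (n + 1) ≠ 1)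
    (a b : ℂ) (N : ℕ) :
    ∑ p ∈ antidiagonal N,
      qPoch a q p.1 / qPoch q q p.1 * (a ^ p.2 * (qPoch b q p.2 / qPoch q q p.2)) =
      qPoch (a * b) q N / qPoch q q N := by
  induction N with
  | zero => simp [qPoch_zero]
  | succ N ih =>
    set u : ℕ → ℂ := fun j ↦ qPoch a q j / qPoch q q j
    set v : ℕ → ℂ := fun k ↦ a ^ k * (qPoch b q k / qPoch q q k)
    have hu (j : ℕ) : (1 - q ^ (j + 1)) * u (j + 1) = (1 - a * q ^ j) * u j :=
      one_sub_pow_succ_mul_qPoch_div_succ hq a j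
    have hv (k : ℕ) : (1 - q ^ (k + 1)) * v (k + 1) = a * (1 - b * q ^ k) * v k := by
      linear_combination a ^ (k + 1) * one_sub_pow_succ_mul_qPoch_div_succ hq b k
    refine mul_left_cancel₀ (sub_ne_zero.mpr (hq N).symm) ?_
    calc (1 - q ^ (N + 1)) * ∑ p ∈ antidiagonal (N + 1), u p.1 * v p.2
        = ∑ p ∈ antidiagonal (N + 1), (1 - q ^ p.1) * u p.1 * v p.2 +
            ∑ p ∈ antidiagonal (N + 1), q ^ p.1 * u p.1 * ((1 - q ^ p.2) * v p.2) := by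
          rw [mul_sum, ← sum_add_distrib]
          refine sum_congr rfl fun p hp ↦ ?_
          rw [← mem_antidiagonal.mp hp]
          ring
      _ = ∑ p ∈ antidiagonal N, (1 - a * q ^ p.1) * u p.1 * v p.2 +
            ∑ p ∈ antidiagonal N, q ^ p.1 * u p.1 * (a * (1 - b * q ^ p.2) * v p.2) := by
          rw [Nat.sum_antidiagonal_succ, Nat.sum_antidiagonal_succ']
          simp only [hu, hv, pow_zero, sub_self, zero_mul, mul_zero, zero_add]
      _ = (1 - a * b * q ^ N) * ∑ p ∈ antidiagonal N, u p.1 * v p.2 := by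
          rw [mul_sum, ← sum_add_distrib]
          refine sum_congr rfl fun p hp ↦ ?_
          rw [← mem_antidiagonal.mp hp]
          ring
      _ = (1 - q ^ (N + 1)) * (qPoch (a * b) q (N + 1) / qPoch q q (N + 1)) := by
          rw [ih, one_sub_pow_succ_mul_qPoch_div_succ hq]

lemma qPoch_zpow_neg_eq_zero {q : ℂ} (hq0 : q ≠ 0) {M k : ℕ} (h : M < k) :
    qPoch (q ^ (-(M : ℤ))) q k = 0 := by
  refine qPoch_eq_zero_iff.mpr ⟨M, h, ?_⟩
  rw [zpow_neg, zpow_natCast, inv_mul_cancel₀ (pow_ne_zero M hq0)]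

lemma qPoch_zpow_neg_mul_qPoch_self {q : ℂ} (hq0 : q ≠ 0) (i k : ℕ) :
    q ^ ((i + k) * k) * qPoch (q ^ (-((i + k : ℕ) : ℤ))) q k * qPoch q q i =
      (-1) ^ k * q ^ k.choose 2 * qPoch q q (i + k) := by
  induction k generalizing i with
  | zero => simp [qPoch_zero]
  | succ k ih =>
    have hpow : q ^ (i + 1 + k) * q ^ (-((i + 1 + k : ℕ) : ℤ)) = 1 := by
      rw [zpow_neg, zpow_natCast, mul_inv_cancel₀ (pow_ne_zero _ hq0)]
    have ih := ih (i + 1)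
    rw [qPoch_self_succ] at ih
    rw [show i + (k + 1) = i + 1 + k by ring, qPoch_succ, Nat.choose_succ_succ' k 1,
      Nat.choose_one_right]
    set c := q ^ (-((i + 1 + k : ℕ) : ℤ))
    linear_combination -q ^ k * ih -
      q ^ k * q ^ ((i + 1 + k) * k) * qPoch c q k * qPoch q q i * hpow

end FiniteFactorial

section Euler

lemma pow_succ_ne_one_of_norm_lt_one {𝕜 : Type*} [NormedDivisionRing 𝕜] {q : 𝕜} (hq1 : ‖q‖ < 1)
    (n : ℕ) : q ^ (n + 1) ≠ 1 := fun h ↦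
  (pow_lt_one₀ (norm_nonneg q) hq1 n.succ_ne_zero).ne (by rw [← norm_pow, h, norm_one])

lemma norm_pow_le_one {𝕜 : Type*} [NormedDivisionRing 𝕜] {q : 𝕜} (hq : ‖q‖ ≤ 1) (n : ℕ) :
    ‖q ^ n‖ ≤ 1 := by
  rw [norm_pow]
  exact pow_le_one₀ (norm_nonneg q) hq

/-- The `k`-th term of Euler's expansion of the infinite `q`-shifted factorial `(z;q)_∞` in powers
of `z`; the exponent `k (k - 1) / 2` of `q` is encoded as `k.choose 2`. -/
noncomputable def qEulerTerm (z q : ℂ) (k : ℕ) : ℂ :=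
  (-1) ^ k * q ^ k.choose 2 * z ^ k / qPoch q q k

lemma qEulerTerm_zero (z q : ℂ) : qEulerTerm z q 0 = 1 := by simp [qEulerTerm, qPoch_zero]

lemma qEulerTerm_mul (z c q : ℂ) (k : ℕ) : qEulerTerm (z * c) q k = c ^ k * qEulerTerm z q k := by
  rw [qEulerTerm, qEulerTerm, mul_pow]
  ring

lemma norm_qEulerTerm_mul_le {c : ℂ} (hc : ‖c‖ ≤ 1) (z q : ℂ) (k : ℕ) :
    ‖qEulerTerm (z * c) q k‖ ≤ ‖qEulerTerm z q k‖ := by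
  rw [qEulerTerm_mul, norm_mul]
  exact mul_le_of_le_one_left (norm_nonneg _) (norm_pow_le_one hc k)

lemma one_sub_pow_succ_mul_qEulerTerm_succ {q : ℂ} (hq : ∀ n : ℕ, q ^ (n + 1) ≠ 1)
    (z : ℂ) (k : ℕ) :
    (1 - q ^ (k + 1)) * qEulerTerm z q (k + 1) = -z * (q ^ k * qEulerTerm z q k) := by
  have := sub_ne_zero.mpr (hq k).symm
  have := qPoch_self_ne_zero hq k
  rw [qEulerTerm, qEulerTerm, qPoch_self_succ, Nat.choose_succ_succ' k 1, Nat.choose_one_right]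
  field_simp
  ring

lemma summable_qEulerTerm {q : ℂ} (hq1 : ‖q‖ < 1) (z : ℂ) : Summable (qEulerTerm z q) := by
  have hpow := tendsto_pow_atTop_nhds_zero_of_norm_lt_one hq1
  have hratio : Tendsto (fun k : ℕ ↦ ‖-z * q ^ k / (1 - q ^ (k + 1))‖) atTop (𝓝 0) := by
    have hpow_succ := (tendsto_add_atTop_iff_nat 1).mpr hpow
    simpa using ((hpow.const_mul (-z)).div (hpow_succ.const_sub 1) (by simp)).norm
  refine summable_of_ratio_norm_eventually_le (r := 1 / 2) (by norm_num) ?_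
  filter_upwards [hratio.eventually_le_const one_half_pos] with k hk
  have hne : 1 - q ^ (k + 1) ≠ 0 := sub_ne_zero.mpr (pow_succ_ne_one_of_norm_lt_one hq1 k).symm
  have hsucc : qEulerTerm z q (k + 1) = -z * q ^ k / (1 - q ^ (k + 1)) * qEulerTerm z q k := by
    rw [div_mul_eq_mul_div, eq_div_iff hne, mul_comm,
      one_sub_pow_succ_mul_qEulerTerm_succ (pow_succ_ne_one_of_norm_lt_one hq1), mul_assoc]
  rw [hsucc, norm_mul]
  gcongr

lemma tsum_qEulerTerm_eq_one_sub_mul {q : ℂ} (hq1 : ‖q‖ < 1) (z : ℂ) :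
    ∑' k, qEulerTerm z q k = (1 - z) * ∑' k, qEulerTerm (z * q) q k := by
  have hz := summable_qEulerTerm hq1 z
  have hzq := summable_qEulerTerm hq1 (z * q)
  have hsub : ∑' k, qEulerTerm z q k - ∑' k, qEulerTerm (z * q) q k =
      -z * ∑' k, qEulerTerm (z * q) q k := by
    rw [← hz.tsum_sub hzq, (hz.sub hzq).tsum_eq_zero_add, ← tsum_mul_left, qEulerTerm_zero,
      qEulerTerm_zero, sub_self, zero_add]
    refine tsum_congr fun k ↦ ?_
    rw [qEulerTerm_mul, qEulerTerm_mul, ← one_sub_mul,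
      one_sub_pow_succ_mul_qEulerTerm_succ (pow_succ_ne_one_of_norm_lt_one hq1)]
  linear_combination hsub

lemma tsum_qEulerTerm_eq_qPoch_mul {q : ℂ} (hq1 : ‖q‖ < 1) (z : ℂ) (n : ℕ) :
    ∑' k, qEulerTerm z q k = qPoch z q n * ∑' k, qEulerTerm (z * q ^ n) q k := by
  induction n with
  | zero => simp [qPoch_zero]
  | succ n ih =>
    rw [ih, tsum_qEulerTerm_eq_one_sub_mul hq1 (z * q ^ n), qPoch_succ, pow_succ]
    simp only [mul_assoc]

lemma tendsto_tsum_qEulerTerm_mul_pow {q : ℂ} (hq1 : ‖q‖ < 1) (z : ℂ) :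
    Tendsto (fun n : ℕ ↦ ∑' k, qEulerTerm (z * q ^ n) q k) atTop (𝓝 1) := by
  have hlim : ∑' k, qEulerTerm (z * 0) q k = 1 := by
    rw [tsum_eq_single 0 fun k hk ↦ by rw [qEulerTerm_mul, zero_pow hk, zero_mul], qEulerTerm_zero]
  rw [← hlim]
  refine tendsto_tsum_of_dominated_convergence (summable_qEulerTerm hq1 z).norm (fun k ↦ ?_) ?_
  · simp only [qEulerTerm_mul]
    exact ((tendsto_pow_atTop_nhds_zero_of_norm_lt_one hq1).pow k).mul_const _
  · exact Eventually.of_forall fun n ↦ norm_qEulerTerm_mul_le (norm_pow_le_one hq1.le n) z q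

lemma multipliable_one_sub_mul_pow {q : ℂ} (hq1 : ‖q‖ < 1) (a : ℂ) :
    Multipliable fun k : ℕ ↦ 1 - a * q ^ k := by
  simp only [sub_eq_add_neg]
  refine multipliable_one_add_of_summable ?_
  simp only [norm_neg, norm_mul, norm_pow]
  exact (summable_geometric_of_lt_one (norm_nonneg q) hq1).mul_left _

lemma tendsto_qPoch_qPochInf {q : ℂ} (hq1 : ‖q‖ < 1) (a : ℂ) :
    Tendsto (qPoch a q) atTop (𝓝 (qPochInf a q)) :=
  (multipliable_one_sub_mul_pow hq1 a).hasProd.tendsto_prod_nat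

lemma qPoch_mul_qPochInf {q : ℂ} (hq1 : ‖q‖ < 1) (a : ℂ) (n : ℕ) :
    qPoch a q n * qPochInf (a * q ^ n) q = qPochInf a q := by
  have htail (k : ℕ) : 1 - a * q ^ n * q ^ k = 1 - a * q ^ (k + n) := by
    rw [mul_assoc, ← pow_add, add_comm n k]
  have hmul := multipliable_one_sub_mul_pow hq1 (a * q ^ n)
  simp only [htail] at hmul
  simp only [qPoch, qPochInf, htail]
  exact hmul.prod_mul_tprod_nat_mul' (f := fun k ↦ 1 - a * q ^ k)

theorem tsum_qEulerTerm {q : ℂ} (hq1 : ‖q‖ < 1) (z : ℂ) :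
    ∑' k, qEulerTerm z q k = qPochInf z q := by
  have hlim := (tendsto_qPoch_qPochInf hq1 z).mul (tendsto_tsum_qEulerTerm_mul_pow hq1 z)
  simp only [← tsum_qEulerTerm_eq_qPoch_mul hq1 z, mul_one] at hlim
  exact tendsto_nhds_unique tendsto_const_nhds hlim

end Euler

section Transformation

lemma hasSum_sum_antidiagonal_of_hasSum {α : Type*} [AddCommMonoid α] [TopologicalSpace α]
    [ContinuousAdd α] [RegularSpace α] {f : (ℕ × ℕ) × ℕ → α} {a : α} (hf : HasSum f a) :
    HasSum (fun p : ℕ × ℕ ↦ ∑ r ∈ antidiagonal p.2 with r.2 ≤ p.1, f ((p.1 - r.2, r.1), r.2))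
      a := by
  let shift : (ℕ × ℕ) × ℕ → ℕ × ℕ := fun t ↦ (t.1.1 + t.2, t.1.2 + t.2)
  refine ((Equiv.sigmaFiberEquiv shift).hasSum_iff.mpr hf).sigma fun ⟨M, N⟩ ↦ ?_
  let fiberEquiv : {r // r ∈ {r ∈ antidiagonal N | r.2 ≤ M}} ≃ {t // shift t = (M, N)} :=
    { toFun r := ⟨((M - r.1.2, r.1.1), r.1.2), by
        have := mem_filter.mp r.2
        grind [HasAntidiagonal.mem_antidiagonal]⟩
      invFun t := ⟨(t.1.1.2, t.1.2), by grind [HasAntidiagonal.mem_antidiagonal]⟩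
      left_inv _ := rfl
      right_inv t := by grind }
  exact fiberEquiv.hasSum_iff.mp
    (Finset.hasSum {r ∈ antidiagonal N | r.2 ≤ M} fun r ↦ f ((M - r.2, r.1), r.2))

lemma sum_antidiagonal_qPoch_mul_qEulerTerm {q : ℂ} (hq0 : q ≠ 0)
    (hq : ∀ n : ℕ, q ^ (n + 1) ≠ 1) (b : ℂ) (M N : ℕ) :
    ∑ r ∈ antidiagonal N with r.2 ≤ M, q ^ ((M - r.2) * r.1) * qPoch b q r.1 /
      (qPoch q q (M - r.2) * qPoch q q r.1) * qEulerTerm (b * q ^ r.1) q r.2 =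
      q ^ (M * N) * qPoch (b * q ^ (-(M : ℤ))) q N / (qPoch q q M * qPoch q q N) := by
  rw [mul_div_mul_comm, ← sum_antidiagonal_qPoch_div_mul_qPoch_div hq, mul_sum, sum_filter]
  refine sum_congr rfl fun ⟨j, k⟩ hp ↦ ?_
  dsimp only
  split_ifs with hk
  · obtain ⟨i, rfl⟩ := Nat.exists_eq_add_of_le' hk
    obtain rfl : j + k = N := mem_antidiagonal.mp hp
    have hshift : q ^ ((i + k) * k) * qPoch (q ^ (-((i + k : ℕ) : ℤ))) q k / qPoch q q (i + k) =
        (-1) ^ k * q ^ k.choose 2 / qPoch q q i := by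
      rw [div_eq_div_iff (qPoch_self_ne_zero hq _) (qPoch_self_ne_zero hq _)]
      exact qPoch_zpow_neg_mul_qPoch_self hq0 i k
    rw [Nat.add_sub_cancel, qEulerTerm]
    linear_combination (-q ^ ((i + k) * j) * qPoch b q j * b ^ k / (qPoch q q j * qPoch q q k)) *
      hshift
  · rw [qPoch_zpow_neg_eq_zero hq0 (not_le.mp hk), zero_div, mul_zero, mul_zero, mul_zero]

lemma summable_mul_qEulerTerm {ι : Type*} {q : ℂ} (hq1 : ‖q‖ < 1) {g : ι → ℂ} (hg : Summable g)
    (z : ℂ) {c : ι → ℂ} (hc : ∀ i, ‖c i‖ ≤ 1) :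
    Summable fun t : ι × ℕ ↦ g t.1 * qEulerTerm (z * c t.1) q t.2 := by
  refine (hg.norm.mul_of_nonneg (summable_qEulerTerm hq1 z).norm (fun _ ↦ norm_nonneg _)
    fun _ ↦ norm_nonneg _).of_norm_bounded fun t ↦ ?_
  rw [norm_mul]
  gcongr
  exact norm_qEulerTerm_mul_le (hc t.1) z q t.2

lemma hasSum_mul_qEulerTerm {ι : Type*} {q : ℂ} (hq1 : ‖q‖ < 1) {g : ι → ℂ} (hg : Summable g)
    (z : ℂ) {c : ι → ℂ} (hc : ∀ i, ‖c i‖ ≤ 1) :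
    HasSum (fun t : ι × ℕ ↦ g t.1 * qEulerTerm (z * c t.1) q t.2)
      (∑' i, g i * qPochInf (z * c i) q) := by
  have hsum := summable_mul_qEulerTerm hq1 hg z hc
  convert hsum.hasSum using 1
  simp only [hsum.tsum_prod, tsum_mul_left, tsum_qEulerTerm hq1]

theorem hasSum_qPoch_mul_zpow_neg {q : ℂ} (hq0 : q ≠ 0) (hq1 : ‖q‖ < 1) {A : ℤ → ℂ} {b y : ℂ}
    (h : Summable fun p : ℕ × ℕ ↦ A ((p.1 : ℤ) - (p.2 : ℤ)) * q ^ (p.1 * p.2) * y ^ p.2 *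
      qPoch b q p.2 / (qPoch q q p.1 * qPoch q q p.2)) :
    HasSum (fun p : ℕ × ℕ ↦ A ((p.1 : ℤ) - (p.2 : ℤ)) * q ^ (p.1 * p.2) * y ^ p.2 *
        qPoch (b * q ^ (-(p.1 : ℤ))) q p.2 / (qPoch q q p.1 * qPoch q q p.2))
      (∑' p : ℕ × ℕ, A ((p.1 : ℤ) - (p.2 : ℤ)) * q ^ (p.1 * p.2) * y ^ p.2 * qPoch b q p.2 /
        (qPoch q q p.1 * qPoch q q p.2) * qPochInf (b * y * q ^ p.2) q) := by
  have htriple := hasSum_mul_qEulerTerm hq1 h (b * y) fun p ↦ norm_pow_le_one hq1.le p.2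
  convert hasSum_sum_antidiagonal_of_hasSum htriple using 2 with ⟨M, N⟩
  have hsum := sum_antidiagonal_qPoch_mul_qEulerTerm hq0 (pow_succ_ne_one_of_norm_lt_one hq1) b M N
  calc _ = A (M - N) * y ^ N * (q ^ (M * N) * qPoch (b * q ^ (-(M : ℤ))) q N /
        (qPoch q q M * qPoch q q N)) := by ring
    _ = _ := by
      rw [← hsum, mul_sum]
      refine sum_congr rfl fun ⟨j, k⟩ hr ↦ ?_
      obtain ⟨hjk, hk⟩ := mem_filter.mp hr
      obtain rfl : j + k = N := mem_antidiagonal.mp hjk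
      have hdiff : ((M - k : ℕ) : ℤ) - j = M - (j + k : ℕ) := by
        push_cast [hk]
        ring
      dsimp only
      rw [hdiff, show b * y * q ^ j = b * q ^ j * y by ring,
        qEulerTerm_mul (b * q ^ j) y, pow_add]
      ring

lemma summable_of_summable_div_qPoch {ι : Type*} {q x : ℂ} (hq1 : ‖q‖ < 1)
    (hx : ∀ n, qPoch x q n ≠ 0) {g : ι → ℂ} {m : ι → ℕ}
    (h : Summable fun p ↦ g p / qPoch x q (m p)) : Summable g := by
  obtain ⟨C, hC⟩ := (tendsto_qPoch_qPochInf hq1 x).norm.bddAbove_range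
  refine (h.norm.mul_left C).of_norm_bounded fun p ↦ ?_
  calc ‖g p‖ = ‖qPoch x q (m p)‖ * ‖g p / qPoch x q (m p)‖ := by
        rw [← norm_mul, mul_div_cancel₀ _ (hx _)]
    _ ≤ C * ‖g p / qPoch x q (m p)‖ := by
        gcongr
        exact hC ⟨m p, rfl⟩

theorem stmt4_general (q : ℂ) (hq0 : 0 < ‖q‖) (hq1 : ‖q‖ < 1)
    (A : ℤ → ℂ) (b x : ℂ) (hb : b ≠ 0) (hx : ∀ m : ℕ, x ≠ q ^ (-(m : ℤ)))
    (h : Summable fun p : ℕ × ℕ ↦ A ((p.1 : ℤ) - (p.2 : ℤ)) * q ^ (p.1 * p.2) *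
      (x / b) ^ p.2 * qPoch b q p.2 / (qPoch q q p.1 * qPoch q q p.2 * qPoch x q p.2)) :
    HasSum (fun p : ℕ × ℕ ↦ A ((p.1 : ℤ) - (p.2 : ℤ)) * q ^ (p.1 * p.2) *
        (x / b) ^ p.2 * qPoch (b * q ^ (-(p.1 : ℤ))) q p.2 / (qPoch q q p.1 * qPoch q q p.2))
      (qPochInf x q * ∑' p : ℕ × ℕ, A ((p.1 : ℤ) - (p.2 : ℤ)) * q ^ (p.1 * p.2) *
        (x / b) ^ p.2 * qPoch b q p.2 / (qPoch q q p.1 * qPoch q q p.2 * qPoch x q p.2)) := by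
  have hx' (n : ℕ) : qPoch x q n ≠ 0 := by
    rw [Ne, qPoch_eq_zero_iff]
    rintro ⟨k, -, hk⟩
    exact hx k (by rw [zpow_neg, zpow_natCast, eq_inv_of_mul_eq_one_left hk])
  simp only [← div_div _ (qPoch q q _ * qPoch q q _)] at h ⊢
  convert hasSum_qPoch_mul_zpow_neg (norm_pos_iff.mp hq0) hq1
    (summable_of_summable_div_qPoch hq1 hx' h) using 1
  rw [← tsum_mul_left]
  refine tsum_congr fun p ↦ ?_
  rw [mul_div_cancel₀ x hb, ← qPoch_mul_qPochInf hq1 x p.2]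
  field_simp [hx' p.2]

end Transformation

theorem stmt4 (q : ℂ) (hq0 : 0 < ‖q‖) (hq1 : ‖q‖ < 1)
    (A : ℤ → ℂ) (b x : ℂ) (hb : b ≠ 0)
    (hx : ∀ m : ℕ, x ≠ q ^ (-(m : ℤ)))
    (h1 : Summable (fun p : ℕ × ℕ => ‖A ((p.1 : ℤ) - (p.2 : ℤ)) * q ^ (p.1 * p.2) *
      (x / b) ^ p.2 * qPoch (b * q ^ (-(p.1 : ℤ))) q p.2 /
      (qPoch q q p.1 * qPoch q q p.2)‖))
    (h2 : Summable (fun p : ℕ × ℕ => ‖A ((p.1 : ℤ) - (p.2 : ℤ)) * q ^ (p.1 * p.2) *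
      (x / b) ^ p.2 * qPoch b q p.2 /
      (qPoch q q p.1 * qPoch q q p.2 * qPoch x q p.2)‖)) :
    ∑' p : ℕ × ℕ, A ((p.1 : ℤ) - (p.2 : ℤ)) * q ^ (p.1 * p.2) *
      (x / b) ^ p.2 * qPoch (b * q ^ (-(p.1 : ℤ))) q p.2 /
      (qPoch q q p.1 * qPoch q q p.2)
    = qPochInf x q * ∑' p : ℕ × ℕ, A ((p.1 : ℤ) - (p.2 : ℤ)) * q ^ (p.1 * p.2) *
      (x / b) ^ p.2 * qPoch b q p.2 /
      (qPoch q q p.1 * qPoch q q p.2 * qPoch x q p.2) := by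
  exact (stmt4_general q hq0 hq1 A b x hb hx h2.of_norm).tsum_eq
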